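/- (Factorization theorem for enhanced Rota-Baxter two-sided braces.) Let (G,B) be an enhanced Rota-Baxter two-sided brace, B₊(a) = a ∘ B(a), G₊ = Im B₊, G₋ = Im B, K₊ = Ker B, K₋ = Ker B₊, Θ : G₋/K₋ → G₊/K₊ the Cayley transform Θ([B(a)]) = [B₊(a)], and G_Θ = {(a₊, a₋) ∈ G₊ × G₋ | Θ([a₋]) = [a₊]}. Then every element a ∈ G can be written uniquely as a = a₊ ∘ (a₋)‾ with (a₊, a₋) ∈ G_Θ (where x̄ denotes the inverse in (G,∘)), and this factorization also satisfies a = (a₋)⁻¹ · a₊ (with x⁻¹ the inverse in (G,·)); explicitly, (a₊, a₋) = (B₊(a), B(a)). -/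

import Mathlib

/-!
Taking `a = e` in the enhanced Rota-Baxter identity gives `x ∘ B b = B (x ∘ b ∘ x̄) · x`, and for
`b = x` this becomes `B₊ x = x ∘ B x = x · B x` (`bplus_eq_mul`). Hence both formulas for `a` in
terms of `(B₊ a, B a)`.

For uniqueness let `(p₊, p₋) ∈ G_Θ` with `p₋ = B c`, so that `t = B₊ c · p₊⁻¹` lies in `Ker B`. The
element `d = p₊ · p₋⁻¹` satisfies `t · d = B₊ c · (B c)⁻¹ = c`, hence `B d = B c = p₋` and
`B₊ d = d · B d = p₊`: every element of `G_Θ` is of the form `(B₊ d, B d)`. Then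
`p₊ ∘ p̄₋ = d`, which recovers `d` from the product.
-/

structure IsGroup {G : Type*} (op : G → G → G) (e : G) (inv : G → G) : Prop where
  assoc : ∀ a b c, op (op a b) c = op a (op b c)
  one_op : ∀ a, op e a = a
  op_one : ∀ a, op a e = a
  inv_op : ∀ a, op (inv a) a = e
  op_inv : ∀ a, op a (inv a) = e

/-- A brace: an abelian group `(G, mul)` and a group `(G, circ)` with the compatibility
`a ∘ (b · c) = (a ∘ b) · a⁻¹ · (a ∘ c)`. -/
structure IsBrace {G : Type*} (mul : G → G → G) (e : G) (inv : G → G)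
    (circ : G → G → G) (ce : G) (cinv : G → G) : Prop where
  mul_group : IsGroup mul e inv
  mul_comm : ∀ a b, mul a b = mul b a
  circ_group : IsGroup circ ce cinv
  compat : ∀ a b c, circ a (mul b c) = mul (mul (circ a b) (inv a)) (circ a c)

/-- A homomorphism of braces preserves both operations. -/
def IsBraceHom {G H : Type*} (mulG circG : G → G → G) (mulH circH : H → H → H)
    (f : G → H) : Prop :=
  (∀ a b, f (mulG a b) = mulH (f a) (f b)) ∧ (∀ a b, f (circG a b) = circH (f a) (f b))

/-- A brace automorphism: a bijective self-homomorphism. -/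
def IsBraceAut {H : Type*} (mulH circH : H → H → H) (f : H → H) : Prop :=
  Function.Bijective f ∧ IsBraceHom mulH circH mulH circH f

/-- A semi-trivial action of the brace `G` on the brace `H`: each `Φ a` is a brace
automorphism of `H` and `Φ (a ∘ b) = Φ a ∘ Φ b`. -/
def IsSemiTrivialAction {G H : Type*} (circG : G → G → G)
    (mulH circH : H → H → H) (Φ : G → H → H) : Prop :=
  (∀ a, IsBraceAut mulH circH (Φ a)) ∧ (∀ a b h, Φ (circG a b) h = Φ a (Φ b h))

/-- A relative Rota-Baxter operator on the brace `G` with respect to the semi-trivial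
action `Φ` of `G` on `H`. -/
def IsRelRBO {G H : Type*} (mulG circG : G → G → G) (mulH circH : H → H → H)
    (Φ : G → H → H) (B : H → G) : Prop :=
  (∀ h k, mulG (B h) (B k) = B (mulH h k)) ∧
  (∀ h k, circG (B h) (B k) = B (circH h (Φ (B h) k)))

/-- An enhanced relative Rota-Baxter operator. -/
def IsEnhancedRelRBO {G H : Type*} (mulG circG : G → G → G) (mulH circH : H → H → H)
    (Φ : G → H → H) (B : H → G) : Prop :=
  (∀ h k, mulG (B h) (B k) = B (mulH h k)) ∧
  (∀ (a : G) (h k : H), circG (mulG (B h) a) (B k)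
      = mulG (B (circH h (Φ (mulG (B h) a) k))) a)

/-- A post-group: a group `(G, circ)` with an operation `tri` such that each left
multiplication `tri a` is an automorphism of `(G, circ)` and the weighted associativity
`(a ∘ (a ⊳ b)) ⊳ c = a ⊳ (b ⊳ c)` holds. -/
structure IsPostGroup {G : Type*} (circ : G → G → G) (ce : G) (cinv : G → G)
    (tri : G → G → G) : Prop where
  circ_group : IsGroup circ ce cinv
  tri_bij : ∀ a, Function.Bijective (tri a)
  tri_circ : ∀ a b c, tri a (circ b c) = circ (tri a b) (tri a c)
  weighted : ∀ a b c, tri (circ a (tri a b)) c = tri a (tri b c)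

/-- A post-brace: a brace `(G, mul, circ)` with `tri` making `(G, circ, tri)` a post-group
and `a ⊳ (b · c) = (a ⊳ b) · (a ⊳ c)`. -/
structure IsPostBrace {G : Type*} (mul : G → G → G) (e : G) (inv : G → G)
    (circ : G → G → G) (ce : G) (cinv : G → G) (tri : G → G → G) : Prop where
  brace : IsBrace mul e inv circ ce cinv
  post : IsPostGroup circ ce cinv tri
  tri_mul : ∀ a b c, tri a (mul b c) = mul (tri a b) (tri a c)

/-- A two-sided brace. -/
def IsTwoSidedBrace {G : Type*} (mul : G → G → G) (e : G) (inv : G → G)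
    (circ : G → G → G) (ce : G) (cinv : G → G) : Prop :=
  IsBrace mul e inv circ ce cinv ∧
  ∀ a b c, circ (mul a b) c = mul (mul (circ a c) (inv c)) (circ b c)

/-- The adjoint action of the `circ`-group: `Ad∘_a(b) = a ∘ b ∘ ā`. -/
def adC {G : Type*} (circ : G → G → G) (cinv : G → G) (a b : G) : G :=
  circ (circ a b) (cinv a)

/-- A Rota-Baxter operator on a two-sided brace (w.r.t. the adjoint semi-trivial action). -/
def IsRBTwoSided {G : Type*} (mul circ : G → G → G) (cinv : G → G) (B : G → G) : Prop :=
  (∀ a b, mul (B a) (B b) = B (mul a b)) ∧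
  (∀ a b, circ (B a) (B b) = B (circ a (adC circ cinv (B a) b)))

/-- An enhanced Rota-Baxter operator on a two-sided brace. -/
def IsEnhancedRBTwoSided {G : Type*} (mul circ : G → G → G) (cinv : G → G)
    (B : G → G) : Prop :=
  IsRBTwoSided mul circ cinv B ∧
  ∀ a b x, circ (mul (B a) x) (B b)
      = mul (B (circ a (adC circ cinv (mul (B a) x) b))) x

/-- `R × Id` on `X × X × X`. -/
def YB12 {X : Type*} (R : X × X → X × X) : X × X × X → X × X × X :=
  fun p => ((R (p.1, p.2.1)).1, (R (p.1, p.2.1)).2, p.2.2)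

/-- `Id × R` on `X × X × X`. -/
def YB23 {X : Type*} (R : X × X → X × X) : X × X × X → X × X × X :=
  fun p => (p.1, R p.2)

/-- A set-theoretical solution of the Yang-Baxter equation. -/
def IsYBSolution {X : Type*} (R : X × X → X × X) : Prop :=
  Function.Bijective R ∧
  YB12 R ∘ YB23 R ∘ YB12 R = YB23 R ∘ YB12 R ∘ YB23 R

/-- Non-degeneracy of a solution `R (a, b) = (φ_a b, ψ_b a)`. -/
def IsNonDegenerate {X : Type*} (R : X × X → X × X) : Prop :=
  (∀ a, Function.Bijective fun b => (R (a, b)).1) ∧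
  (∀ b, Function.Bijective fun a => (R (a, b)).2)

/-- Involutivity of a solution: `R ∘ R = Id`. -/
def IsInvolutiveSol {X : Type*} (R : X × X → X × X) : Prop :=
  ∀ p, R (R p) = p

/-- A matched pair of groups `(G, H, σ)` with `σ (a, h) = (r a h, l a h)`. -/
def IsMatchedPairOfGroups {G H : Type*} (opG : G → G → G) (eG : G)
    (opH : H → H → H) (eH : H) (r : G → H → H) (l : G → H → G) : Prop :=
  (∀ h, r eG h = h) ∧
  (∀ a b h, r a (r b h) = r (opG a b) h) ∧
  (∀ a b h, l (opG a b) h = opG (l a (r b h)) (l b h)) ∧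
  (∀ a, l a eH = a) ∧
  (∀ a h k, l (l a h) k = l a (opH h k)) ∧
  (∀ a h k, r a (opH h k) = opH (r a h) (r (l a h) k))

/-- A left ideal of the brace with multiplication `op` (with unit `u`) and second
operation `cop`: a subgroup of the `op`-group such that `p⁻¹ op (p cop x) ∈ S`
(expressed via the unique solution `r` of `op p r = cop p x`). -/
def IsLeftIdealOf {P : Type*} (op : P → P → P) (u : P) (cop : P → P → P)
    (S : Set P) : Prop :=
  u ∈ S ∧ (∀ p ∈ S, ∀ q ∈ S, op p q ∈ S) ∧
  (∀ p ∈ S, ∃ q ∈ S, op p q = u ∧ op q p = u) ∧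
  (∀ p : P, ∀ x ∈ S, ∀ r, op p r = cop p x → r ∈ S)

/-- `I` is an ideal of the sub-brace `S` of the ambient brace: a subgroup of `(S, mul)`,
normal in `(S, mul)` and in `(S, circ)`, and a left ideal of `S`. -/
def IsIdealOfSub {G : Type*} (mul : G → G → G) (e : G) (inv : G → G)
    (circ : G → G → G) (cinv : G → G) (S I : Set G) : Prop :=
  I ⊆ S ∧ e ∈ I ∧
  (∀ x ∈ I, ∀ y ∈ I, mul x y ∈ I) ∧ (∀ x ∈ I, inv x ∈ I) ∧
  (∀ s ∈ S, ∀ x ∈ I, mul (mul s x) (inv s) ∈ I) ∧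
  (∀ s ∈ S, ∀ x ∈ I, circ (circ s x) (cinv s) ∈ I) ∧
  (∀ s ∈ S, ∀ x ∈ I, mul (inv s) (circ s x) ∈ I)

/-- The units of the two groups underlying a brace coincide. -/
lemma IsBrace.circ_one_eq {G : Type*} {mul : G → G → G} {e : G} {inv : G → G}
    {circ : G → G → G} {ce : G} {cinv : G → G}
    (h : IsBrace mul e inv circ ce cinv) : ce = e := by
  have h1 := h.compat ce e e
  rw [h.circ_group.one_op, h.mul_group.op_one, h.circ_group.one_op, h.mul_group.op_one,
    h.mul_group.one_op] at h1
  have h2 := h.mul_group.op_inv ce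
  rwa [← h1, h.mul_group.op_one] at h2

/-- A map compatible with `mul` fixes the unit. -/
lemma IsGroup.map_unit {G : Type*} {mul : G → G → G} {e : G} {inv : G → G}
    (h : IsGroup mul e inv) {B : G → G} (hB : ∀ a b, mul (B a) (B b) = B (mul a b)) :
    B e = e := by
  have h1 := hB e e
  rw [h.one_op] at h1
  have h2 := congrArg (mul (inv (B e))) h1
  rwa [← h.assoc, h.inv_op, h.one_op] at h2

/-- The key consequence of the enhanced identity: on pairs `(a, B a)` the two operations of the
brace agree. -/
lemma bplus_eq_mul {G : Type*} {mul : G → G → G} {e : G} {inv : G → G}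
    {circ : G → G → G} {ce : G} {cinv : G → G}
    (hG : IsTwoSidedBrace mul e inv circ ce cinv)
    {B : G → G} (hB : IsEnhancedRBTwoSided mul circ cinv B) (a : G) :
    circ a (B a) = mul a (B a) := by
  obtain ⟨hb, -⟩ := hG
  have hce := hb.circ_one_eq
  subst hce
  have h := hB.2 ce a a
  rwa [hb.mul_group.map_unit hB.1.1, hb.mul_group.one_op, hb.circ_group.one_op, adC,
    hb.circ_group.assoc, hb.circ_group.op_inv, hb.circ_group.op_one, hb.mul_comm (B a)] at h

/-- (Factorization theorem.) For an enhanced Rota-Baxter two-sided brace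
`(G, B)`, with `G_Θ = {(a₊, a₋) ∈ G₊ × G₋ | Θ([a₋]) = [a₊]}`, every `a ∈ G` is uniquely
`a = a₊ ∘ (a₋)‾` with `(a₊, a₋) ∈ G_Θ`; the factorization also satisfies
`a = (a₋)⁻¹ · a₊`, and explicitly `(a₊, a₋) = (B₊(a), B(a))`. -/
theorem statement19 {G : Type*} (mul : G → G → G) (e : G) (inv : G → G)
    (circ : G → G → G) (ce : G) (cinv : G → G)
    (hG : IsTwoSidedBrace mul e inv circ ce cinv)
    (B : G → G) (hB : IsEnhancedRBTwoSided mul circ cinv B)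
    (Bplus : G → G) (hBplus : ∀ a, Bplus a = circ a (B a))
    (GTheta : Set (G × G))
    (hGTheta : ∀ p : G × G, p ∈ GTheta ↔
      (p.1 ∈ Set.range Bplus ∧ ∃ c : G, B c = p.2 ∧ B (mul (Bplus c) (inv p.1)) = e)) :
    ∀ a : G,
      ((Bplus a, B a) ∈ GTheta ∧
        a = circ (Bplus a) (cinv (B a)) ∧
        a = mul (inv (B a)) (Bplus a)) ∧
      (∀ p : G × G, p ∈ GTheta → a = circ p.1 (cinv p.2) → p = (Bplus a, B a)) := by
  have hm := hG.1.mul_group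
  have hc := hG.1.circ_group
  have hplus : ∀ a, Bplus a = mul a (B a) := fun a => by rw [hBplus, bplus_eq_mul hG hB]
  have hfac : ∀ a, a = circ (Bplus a) (cinv (B a)) := fun a => by
    rw [hBplus, hc.assoc, hc.op_inv, hc.op_one]
  have hmul : ∀ a, mul (Bplus a) (inv (B a)) = a := fun a => by
    rw [hplus, hm.assoc, hm.op_inv, hm.op_one]
  intro a
  refine ⟨⟨?_, hfac a, ?_⟩, ?_⟩
  · exact (hGTheta _).2 ⟨⟨a, rfl⟩, a, rfl, by rw [hm.op_inv, hm.map_unit hB.1.1]⟩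
  · rw [hG.1.mul_comm, hmul]
  · rintro ⟨p, q⟩ hp ha
    obtain ⟨-, c, rfl, hk⟩ := (hGTheta _).1 hp
    dsimp only at hk ha
    -- The element `d = p · (B c)⁻¹` differs from `c` by the factor `B₊ c · p⁻¹ ∈ Ker B`.
    have hd : B (mul p (inv (B c))) = B c := by
      have h1 := hB.1.1 (mul (Bplus c) (inv p)) (mul p (inv (B c)))
      rwa [hk, hm.one_op, hm.assoc, ← hm.assoc (inv p), hm.inv_op, hm.one_op, hmul] at h1
    have hpd : Bplus (mul p (inv (B c))) = p := by
      rw [hplus, hd, hm.assoc, hm.inv_op, hm.op_one]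
    have had : a = mul p (inv (B c)) := by
      rw [ha, hfac (mul p (inv (B c))), hd, hpd]
    rw [had, hd, hpd]
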